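/- Let G be a bounded measurable subset of ℝ² with finite Lebesgue measure |G|. For all smooth compactly supported vector fields u, v, w : ℝ² → ℝ² with supports contained in G, the trilinear form satisfies |𝔞(u,v,w)| ≤ (√|G|/2) · |u|_{1,2} · |v|_{1,2} · |w|_{1,2}. -/

import Mathlib

open MeasureTheory

/-- Partial derivative `∂f/∂x_j` of a scalar field on `ℝ²`. -/
noncomputable def pd (f : EuclideanSpace ℝ (Fin 2) → ℝ) (j : Fin 2)
    (x : EuclideanSpace ℝ (Fin 2)) : ℝ :=
  fderiv ℝ f x (EuclideanSpace.single j 1)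

/-- The Dirichlet (gradient `L²`) norm `|u|_{1,2}` of a vector field on `ℝ²`. -/
noncomputable def dirichletNorm (u : EuclideanSpace ℝ (Fin 2) → Fin 2 → ℝ) : ℝ :=
  Real.sqrt (∫ x, ∑ i : Fin 2, ∑ j : Fin 2, (pd (fun y => u y i) j x) ^ 2)

/-- The trilinear form `𝔞(u,v,w) = ∫ Σ_{i,j} uʲ ∂vⁱ/∂x_j wⁱ dx`. -/
noncomputable def triFormA (u v w : EuclideanSpace ℝ (Fin 2) → Fin 2 → ℝ) : ℝ :=
  ∫ x, ∑ i : Fin 2, ∑ j : Fin 2, u x j * pd (fun y => v y i) j x * w x i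

/-- One-dimensional bound with the sharp constant `1/2`. -/
theorem aux_one_dim (g : ℝ → ℝ) (hg : ContDiff ℝ 1 g) (hc : HasCompactSupport g) (x : ℝ) :
    |g x| ≤ 1 / 2 * ∫ t, |deriv g t| := by
  have hi : Integrable (deriv g) :=
    (hg.continuous_deriv le_rfl).integrable_of_hasCompactSupport hc.deriv
  have h1 := hc.integral_Iic_deriv_eq hg x
  have h2 := hc.integral_Ioi_deriv_eq hg x
  have h3 : |∫ t in Set.Iic x, deriv g t| ≤ ∫ t in Set.Iic x, |deriv g t| :=
    abs_integral_le_integral_abs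
  have h4 : |∫ t in Set.Ioi x, deriv g t| ≤ ∫ t in Set.Ioi x, |deriv g t| :=
    abs_integral_le_integral_abs
  have h5 := intervalIntegral.integral_Iic_add_Ioi (b := x) hi.abs.integrableOn hi.abs.integrableOn
  rw [h1] at h3
  rw [h2, abs_neg] at h4
  linarith

theorem aux_pd_continuous (f : EuclideanSpace ℝ (Fin 2) → ℝ) (hf : ContDiff ℝ 1 f) (j : Fin 2) :
    Continuous (pd f j) :=
  (hf.continuous_fderiv one_ne_zero).clm_apply continuous_const

theorem aux_pd_supp (f : EuclideanSpace ℝ (Fin 2) → ℝ) (hc : HasCompactSupport f) (j : Fin 2) :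
    HasCompactSupport (pd f j) :=
  (hc.fderiv (𝕜 := ℝ)).comp_left (g := fun L : EuclideanSpace ℝ (Fin 2) →L[ℝ] ℝ =>
    L (EuclideanSpace.single j 1)) rfl

theorem aux_sq_int (g : EuclideanSpace ℝ (Fin 2) → ℝ) (hg : Continuous g)
    (hc : HasCompactSupport g) : Integrable (fun x => g x ^ 2) := by
  have h1 : Continuous (fun x => g x ^ 2) := by fun_prop
  have h2 : HasCompactSupport (fun x => g x ^ 2) := by
    refine hc.mono fun x hx h => hx ?_
    simp only [h]
    norm_num
  exact h1.integrable_of_hasCompactSupport h2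

theorem aux_slice (f : EuclideanSpace ℝ (Fin 2) → ℝ) (hf : ContDiff ℝ 1 f)
    (hc : HasCompactSupport f) (j : Fin 2) (c : EuclideanSpace ℝ (Fin 2)) (s : ℝ) :
    |f (s • EuclideanSpace.single j 1 + c)| ≤
      1 / 2 * ∫ t : ℝ, |pd f j (t • EuclideanSpace.single j 1 + c)| := by
  have hiso : Isometry (fun t : ℝ => t • EuclideanSpace.single j (1 : ℝ) + c) := by
    refine Isometry.of_dist_eq fun a b => ?_
    rw [dist_add_right, dist_eq_norm, ← sub_smul, norm_smul]
    simp [Real.dist_eq]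
  have hd : ∀ t : ℝ, deriv (fun t : ℝ => f (t • EuclideanSpace.single j (1 : ℝ) + c)) t =
      pd f j (t • EuclideanSpace.single j 1 + c) := by
    intro t
    have h1 : HasDerivAt (fun t : ℝ => t • EuclideanSpace.single j (1 : ℝ) + c)
        (EuclideanSpace.single j (1 : ℝ)) t := by
      simpa using ((hasDerivAt_id t).smul_const (EuclideanSpace.single j (1 : ℝ))).add_const c
    exact ((hf.differentiable one_ne_zero _).hasFDerivAt.comp_hasDerivAt t h1).deriv
  have := aux_one_dim (fun t : ℝ => f (t • EuclideanSpace.single j (1 : ℝ) + c))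
    (hf.comp (by fun_prop)) (hc.comp_isClosedEmbedding hiso.isClosedEmbedding) s
  simpa only [hd] using this

/-- Parametrisation of the plane. -/
theorem aux_param : ∃ p : ℝ × ℝ → EuclideanSpace ℝ (Fin 2),
    MeasurePreserving p ∧ MeasurableEmbedding p ∧
    (∀ z, p z = z.1 • EuclideanSpace.single 0 1 + z.2 • EuclideanSpace.single 1 1) := by
  refine ⟨fun z => MeasurableEquiv.toLp 2 (Fin 2 → ℝ) (MeasurableEquiv.finTwoArrow.symm z), ?_, ?_, ?_⟩
  · exact (PiLp.volume_preserving_toLp (Fin 2)).comp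
      ((volume_preserving_finTwoArrow ℝ).symm)
  · exact (MeasurableEquiv.toLp 2 (Fin 2 → ℝ)).measurableEmbedding.comp
      (MeasurableEquiv.finTwoArrow.symm).measurableEmbedding
  · intro z
    ext i
    fin_cases i <;> simp [MeasurableEquiv.finTwoArrow]

theorem aux_gagliardo (f : EuclideanSpace ℝ (Fin 2) → ℝ) (hf : ContDiff ℝ 1 f)
    (hc : HasCompactSupport f) :
    ∫ x, f x ^ 2 ≤ 1 / 4 * ((∫ x, |pd f 0 x|) * ∫ x, |pd f 1 x|) := by
  obtain ⟨p, hp, hpe, hpz⟩ := aux_param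
  have hi : ∀ j, Integrable (fun z => |pd f j (p z)|) (volume.prod volume) := fun j =>
    ((hp.integrable_comp_emb hpe).2 (((aux_pd_continuous f hf j).integrable_of_hasCompactSupport
      (aux_pd_supp f hc j)).abs))
  have hf2 : Integrable (fun x => f x ^ 2) := aux_sq_int f hf.continuous hc
  have hf2' : Integrable (fun z => f (p z) ^ 2) (volume.prod volume) :=
    (hp.integrable_comp_emb hpe).2 hf2
  rw [← hp.integral_comp hpe, ← hp.integral_comp hpe (fun x => |pd f 0 x|),
    ← hp.integral_comp hpe (fun x => |pd f 1 x|)]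
  have e0 : ∫ z, |pd f 0 (p z)| = ∫ b : ℝ, ∫ a : ℝ, |pd f 0 (p (a, b))| :=
    integral_prod_symm _ (hi 0)
  have e1 : ∫ z, |pd f 1 (p z)| = ∫ a : ℝ, ∫ b : ℝ, |pd f 1 (p (a, b))| :=
    integral_prod _ (hi 1)
  rw [e0, e1, mul_comm (∫ b : ℝ, ∫ a : ℝ, |pd f 0 (p (a, b))|),
    ← integral_prod_mul (μ := (volume : Measure ℝ)) (ν := (volume : Measure ℝ)),
    ← integral_const_mul]
  refine integral_mono hf2' (((hi 1).integral_prod_left.mul_prod (hi 0).integral_prod_right).const_mul _) ?_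
  rintro ⟨a, b⟩
  have h0 := aux_slice f hf hc 0 (b • EuclideanSpace.single 1 1) a
  have h1 := aux_slice f hf hc 1 (a • EuclideanSpace.single 0 1) b
  simp only [add_comm (_ • EuclideanSpace.single (1 : Fin 2) (1 : ℝ))] at h1
  simp only [hpz]
  have := mul_le_mul h0 h1 (abs_nonneg _) ((abs_nonneg _).trans h0)
  rw [abs_mul_abs_self] at this
  nlinarith [this]

theorem aux_cs {α : Type*} [MeasurableSpace α] (μ : Measure α) (f g : α → ℝ)
    (hf : Integrable (fun x => f x ^ 2) μ) (hg : Integrable (fun x => g x ^ 2) μ)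
    (hfg : Integrable (fun x => f x * g x) μ) :
    (∫ x, f x * g x ∂μ) ^ 2 ≤ (∫ x, f x ^ 2 ∂μ) * ∫ x, g x ^ 2 ∂μ := by
  have key : ∀ t : ℝ, 0 ≤ (∫ x, f x ^ 2 ∂μ) * (t * t) + (2 * ∫ x, f x * g x ∂μ) * t
      + ∫ x, g x ^ 2 ∂μ := by
    intro t
    have h : 0 ≤ ∫ x, (f x ^ 2 * (t * t) + f x * g x * (2 * t)) + g x ^ 2 ∂μ :=
      integral_nonneg fun x => by
        have := sq_nonneg (f x * t + g x)
        simp only [Pi.zero_apply]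
        nlinarith
    have hadd : Integrable (fun x => f x ^ 2 * (t * t) + f x * g x * (2 * t)) μ :=
      (hf.mul_const _).add (hfg.mul_const _)
    rw [integral_add hadd hg,
      integral_add (hf.mul_const _) (hfg.mul_const _), integral_mul_const, integral_mul_const] at h
    linarith
  have := discrim_le_zero key
  rw [discrim] at this
  nlinarith

/-- Properties of components. -/
theorem aux_comp (u : EuclideanSpace ℝ (Fin 2) → Fin 2 → ℝ) (hu : ContDiff ℝ (⊤ : ℕ∞) u)
    (hs : HasCompactSupport u) (i : Fin 2) :
    ContDiff ℝ 1 (fun y => u y i) ∧ HasCompactSupport (fun y => u y i) := by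
  refine ⟨?_, hs.comp_left (g := fun v : Fin 2 → ℝ => v i) rfl⟩
  exact (contDiff_pi.1 (hu.of_le (by exact_mod_cast le_top))) i

theorem aux_integrable (u : EuclideanSpace ℝ (Fin 2) → Fin 2 → ℝ) (hs : HasCompactSupport u)
    (g : EuclideanSpace ℝ (Fin 2) → ℝ) (hg : Continuous g)
    (h0 : ∀ x, u x = 0 → g x = 0) : Integrable g := by
  refine hg.integrable_of_hasCompactSupport (hs.mono fun x hx => ?_)
  exact fun h => hx (h0 x h)

theorem aux_grad_integrable (u : EuclideanSpace ℝ (Fin 2) → Fin 2 → ℝ)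
    (hu : ContDiff ℝ (⊤ : ℕ∞) u) (hs : HasCompactSupport u) (i j : Fin 2) :
    Integrable (fun x => pd (fun y => u y i) j x ^ 2) := by
  obtain ⟨h1, h2⟩ := aux_comp u hu hs i
  exact aux_sq_int _ (aux_pd_continuous _ h1 j) (aux_pd_supp _ h2 j)

theorem aux_L4 (G : Set (EuclideanSpace ℝ (Fin 2)))
    (hGmeas : MeasurableSet G) (hGbdd : Bornology.IsBounded G)
    (u : EuclideanSpace ℝ (Fin 2) → Fin 2 → ℝ)
    (hu : ContDiff ℝ (⊤ : ℕ∞) u) (hs : HasCompactSupport u) (huG : tsupport u ⊆ G) :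
    ∫ x, (u x 0 ^ 2 + u x 1 ^ 2) ^ 2 ≤ (volume G).toReal / 4 *
      (∫ x, ∑ i : Fin 2, ∑ j : Fin 2, (pd (fun y => u y i) j x) ^ 2) ^ 2 := by
  obtain ⟨d0, c0⟩ := aux_comp u hu hs 0
  obtain ⟨d1, c1⟩ := aux_comp u hu hs 1
  have k0 := d0.continuous
  have k1 := d1.continuous
  have hfd : ContDiff ℝ 1 (fun x => u x 0 ^ 2 + u x 1 ^ 2) := (d0.pow 2).add (d1.pow 2)
  have hfc : HasCompactSupport (fun x => u x 0 ^ 2 + u x 1 ^ 2) :=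
    hs.comp_left (g := fun v : Fin 2 → ℝ => v 0 ^ 2 + v 1 ^ 2) (by simp)
  have hpd : ∀ j x, pd (fun x => u x 0 ^ 2 + u x 1 ^ 2) j x =
      2 * (u x 0 * pd (fun y => u y 0) j x + u x 1 * pd (fun y => u y 1) j x) := by
    intro j x
    have a0 := (d0.differentiable one_ne_zero x).hasFDerivAt
    have a1 := (d1.differentiable one_ne_zero x).hasFDerivAt
    unfold pd
    have hh : HasFDerivAt (fun x => u x 0 ^ 2 + u x 1 ^ 2) _ x := (a0.pow 2).add (a1.pow 2)
    rw [hh.fderiv]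
    simp
    ring
  have hX := aux_gagliardo _ hfd hfc
  have iS : Integrable (fun x => u x 0 ^ 2 + u x 1 ^ 2) :=
    hfd.continuous.integrable_of_hasCompactSupport hfc
  have iX : Integrable (fun x => (u x 0 ^ 2 + u x 1 ^ 2) ^ 2) :=
    aux_integrable u hs _ (by fun_prop) (fun x hx => by simp [hx])
  have iD := aux_grad_integrable u hu hs
  have iDD : ∀ j, Integrable (fun x =>
      pd (fun y => u y 0) j x ^ 2 + pd (fun y => u y 1) j x ^ 2) :=
    fun j => (iD 0 j).add (iD 1 j)
  have hP : ∀ j, (∫ x, |pd (fun x => u x 0 ^ 2 + u x 1 ^ 2) j x|) ^ 2 ≤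
      4 * ((∫ x, (u x 0 ^ 2 + u x 1 ^ 2)) *
        ∫ x, (pd (fun y => u y 0) j x ^ 2 + pd (fun y => u y 1) j x ^ 2)) := by
    intro j
    have q0 := aux_pd_continuous _ d0 j
    have q1 := aux_pd_continuous _ d1 j
    have sq1 : ∀ x, Real.sqrt (u x 0 ^ 2 + u x 1 ^ 2) ^ 2 = u x 0 ^ 2 + u x 1 ^ 2 :=
      fun x => Real.sq_sqrt (by positivity)
    have sq2 : ∀ x, Real.sqrt (pd (fun y => u y 0) j x ^ 2 + pd (fun y => u y 1) j x ^ 2) ^ 2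
        = pd (fun y => u y 0) j x ^ 2 + pd (fun y => u y 1) j x ^ 2 :=
      fun x => Real.sq_sqrt (by positivity)
    have i3 : Integrable (fun x => Real.sqrt (u x 0 ^ 2 + u x 1 ^ 2) *
        Real.sqrt (pd (fun y => u y 0) j x ^ 2 + pd (fun y => u y 1) j x ^ 2)) :=
      aux_integrable u hs _ (by fun_prop) (fun x hx => by simp [hx])
    have cs := aux_cs volume (fun x => Real.sqrt (u x 0 ^ 2 + u x 1 ^ 2))
      (fun x => Real.sqrt (pd (fun y => u y 0) j x ^ 2 + pd (fun y => u y 1) j x ^ 2))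
      (by simpa only [sq1] using iS) (by simpa only [sq2] using iDD j) i3
    simp only [sq1, sq2] at cs
    have hle : ∫ x, |pd (fun x => u x 0 ^ 2 + u x 1 ^ 2) j x| ≤
        2 * ∫ x, Real.sqrt (u x 0 ^ 2 + u x 1 ^ 2) *
        Real.sqrt (pd (fun y => u y 0) j x ^ 2 + pd (fun y => u y 1) j x ^ 2) := by
      rw [← integral_const_mul]
      refine integral_mono ((aux_pd_continuous _ hfd j).integrable_of_hasCompactSupport
        (aux_pd_supp _ hfc j)).abs (i3.const_mul 2) fun x => ?_
      simp only [hpd]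
      rw [abs_mul, abs_two]
      refine mul_le_mul_of_nonneg_left ?_ zero_le_two
      refine abs_le_of_sq_le_sq ?_ (by positivity)
      rw [mul_pow, sq1, sq2]
      nlinarith [sq_nonneg (u x 0 * pd (fun y => u y 1) j x - u x 1 * pd (fun y => u y 0) j x)]
    have hn : 0 ≤ ∫ x, |pd (fun x => u x 0 ^ 2 + u x 1 ^ 2) j x| :=
      integral_nonneg fun x => abs_nonneg _
    have := pow_le_pow_left₀ hn hle 2
    nlinarith
  have hD : ∫ x, ∑ i : Fin 2, ∑ j : Fin 2, (pd (fun y => u y i) j x) ^ 2 =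
      (∫ x, (pd (fun y => u y 0) 0 x ^ 2 + pd (fun y => u y 1) 0 x ^ 2)) +
      ∫ x, (pd (fun y => u y 0) 1 x ^ 2 + pd (fun y => u y 1) 1 x ^ 2) := by
    rw [← integral_add (iDD 0) (iDD 1)]
    congr 1
    ext x
    simp [Fin.sum_univ_two]
    ring
  have hGfin : volume G ≠ ⊤ := hGbdd.measure_lt_top.ne
  have hS : (∫ x, (u x 0 ^ 2 + u x 1 ^ 2)) ^ 2 ≤
      (∫ x, (u x 0 ^ 2 + u x 1 ^ 2) ^ 2) * (volume G).toReal := by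
    have e1 : ∀ x, (u x 0 ^ 2 + u x 1 ^ 2) * G.indicator (fun _ => (1 : ℝ)) x
        = u x 0 ^ 2 + u x 1 ^ 2 := by
      intro x
      by_cases hx : x ∈ G
      · simp [hx]
      · have : u x = 0 := image_eq_zero_of_notMem_tsupport fun h => hx (huG h)
        simp [this]
    have e2 : ∀ x, G.indicator (fun _ => (1 : ℝ)) x ^ 2 = G.indicator (fun _ => (1 : ℝ)) x := by
      intro x
      by_cases hx : x ∈ G <;> simp [hx]
    have iG : Integrable (G.indicator (fun _ => (1 : ℝ))) :=
      (integrable_indicator_iff hGmeas).2 (integrableOn_const hGfin)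
    have := aux_cs volume (fun x => u x 0 ^ 2 + u x 1 ^ 2) (G.indicator (fun _ => (1 : ℝ))) iX
      (by simpa only [e2] using iG) (by simpa only [e1] using iS)
    simp only [e1, e2] at this
    rw [integral_indicator hGmeas] at this
    simpa [Measure.real] using this
  have hP0 := hP 0
  have hP1 := hP 1
  rw [hD]
  have nD0 : 0 ≤ ∫ x, (pd (fun y => u y 0) 0 x ^ 2 + pd (fun y => u y 1) 0 x ^ 2) :=
    integral_nonneg fun x => by positivity
  have nD1 : 0 ≤ ∫ x, (pd (fun y => u y 0) 1 x ^ 2 + pd (fun y => u y 1) 1 x ^ 2) :=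
    integral_nonneg fun x => by positivity
  have nX : 0 ≤ ∫ x, (u x 0 ^ 2 + u x 1 ^ 2) ^ 2 := integral_nonneg fun x => by positivity
  have nS : 0 ≤ ∫ x, (u x 0 ^ 2 + u x 1 ^ 2) := integral_nonneg fun x => by positivity
  have nV : 0 ≤ (volume G).toReal := ENNReal.toReal_nonneg
  generalize (∫ x, (pd (fun y => u y 0) 0 x ^ 2 + pd (fun y => u y 1) 0 x ^ 2)) = D0 at *
  generalize (∫ x, (pd (fun y => u y 0) 1 x ^ 2 + pd (fun y => u y 1) 1 x ^ 2)) = D1 at *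
  generalize (∫ x, (u x 0 ^ 2 + u x 1 ^ 2) ^ 2) = X at *
  generalize (∫ x, (u x 0 ^ 2 + u x 1 ^ 2)) = S at *
  generalize (∫ x, |pd (fun x => u x 0 ^ 2 + u x 1 ^ 2) 0 x|) = P0 at *
  generalize (∫ x, |pd (fun x => u x 0 ^ 2 + u x 1 ^ 2) 1 x|) = P1 at *
  generalize (volume G).toReal = V at *
  have s1 : X ^ 2 ≤ (1 / 4 * (P0 * P1)) ^ 2 := pow_le_pow_left₀ nX hX 2
  have s2 : P0 ^ 2 * P1 ^ 2 ≤ (4 * (S * D0)) * (4 * (S * D1)) :=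
    mul_le_mul hP0 hP1 (sq_nonneg _) (by positivity)
  have s3 : D0 * D1 ≤ (D0 + D1) ^ 2 / 4 := by nlinarith [sq_nonneg (D0 - D1)]
  have s4 : S ^ 2 * (D0 * D1) ≤ X * V * ((D0 + D1) ^ 2 / 4) :=
    mul_le_mul hS s3 (by positivity) (by positivity)
  have s5 : X * X ≤ X * (V / 4 * (D0 + D1) ^ 2) := by nlinarith
  rcases nX.eq_or_lt with h | h
  · rw [← h]; positivity
  · exact le_of_mul_le_mul_left s5 h

/-- Continuity bound for the trilinear form:
`|𝔞(u,v,w)| ≤ (√|G|/2)·|u|_{1,2}·|v|_{1,2}·|w|_{1,2}`. -/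
theorem triFormA_bound
    (G : Set (EuclideanSpace ℝ (Fin 2)))
    (hGmeas : MeasurableSet G) (hGbdd : Bornology.IsBounded G)
    (u v w : EuclideanSpace ℝ (Fin 2) → Fin 2 → ℝ)
    (hu : ContDiff ℝ (⊤ : ℕ∞) u) (hv : ContDiff ℝ (⊤ : ℕ∞) v) (hw : ContDiff ℝ (⊤ : ℕ∞) w)
    (husupp : HasCompactSupport u) (hvsupp : HasCompactSupport v)
    (hwsupp : HasCompactSupport w)
    (huG : tsupport u ⊆ G) (hvG : tsupport v ⊆ G) (hwG : tsupport w ⊆ G) :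
    |triFormA u v w| ≤
      Real.sqrt (volume G).toReal / 2 *
        dirichletNorm u * dirichletNorm v * dirichletNorm w := by
  obtain ⟨du0, -⟩ := aux_comp u hu husupp 0
  obtain ⟨du1, -⟩ := aux_comp u hu husupp 1
  obtain ⟨dv0, -⟩ := aux_comp v hv hvsupp 0
  obtain ⟨dv1, -⟩ := aux_comp v hv hvsupp 1
  obtain ⟨dw0, -⟩ := aux_comp w hw hwsupp 0
  obtain ⟨dw1, -⟩ := aux_comp w hw hwsupp 1
  have ku0 := du0.continuous
  have ku1 := du1.continuous
  have kw0 := dw0.continuous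
  have kw1 := dw1.continuous
  have q00 := aux_pd_continuous _ dv0 0
  have q01 := aux_pd_continuous _ dv0 1
  have q10 := aux_pd_continuous _ dv1 0
  have q11 := aux_pd_continuous _ dv1 1
  have hXu := aux_L4 G hGmeas hGbdd u hu husupp huG
  have hXw := aux_L4 G hGmeas hGbdd w hw hwsupp hwG
  have iD := aux_grad_integrable v hv hvsupp
  have iDv : Integrable (fun x => ∑ i : Fin 2, ∑ j : Fin 2, (pd (fun y => v y i) j x) ^ 2) :=
    integrable_finsetSum _ fun i _ => integrable_finsetSum _ fun j _ => iD i j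
  have kD : Continuous (fun x => ∑ i : Fin 2, ∑ j : Fin 2, (pd (fun y => v y i) j x) ^ 2) := by
    simp only [Fin.sum_univ_two]
    fun_prop
  have iXu : Integrable (fun x => (u x 0 ^ 2 + u x 1 ^ 2) ^ 2) :=
    aux_integrable u husupp _ (by fun_prop) (fun x hx => by simp [hx])
  have iXw : Integrable (fun x => (w x 0 ^ 2 + w x 1 ^ 2) ^ 2) :=
    aux_integrable w hwsupp _ (by fun_prop) (fun x hx => by simp [hx])
  have iuw : Integrable (fun x => (u x 0 ^ 2 + u x 1 ^ 2) * (w x 0 ^ 2 + w x 1 ^ 2)) :=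
    aux_integrable u husupp _ (by fun_prop) (fun x hx => by simp [hx])
  have cs1 := aux_cs volume (fun x => u x 0 ^ 2 + u x 1 ^ 2) (fun x => w x 0 ^ 2 + w x 1 ^ 2)
    iXu iXw iuw
  have sq1 : ∀ x, Real.sqrt ((u x 0 ^ 2 + u x 1 ^ 2) * (w x 0 ^ 2 + w x 1 ^ 2)) ^ 2 =
      (u x 0 ^ 2 + u x 1 ^ 2) * (w x 0 ^ 2 + w x 1 ^ 2) :=
    fun x => Real.sq_sqrt (by positivity)
  have sq2 : ∀ x, Real.sqrt (∑ i : Fin 2, ∑ j : Fin 2, (pd (fun y => v y i) j x) ^ 2) ^ 2 =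
      ∑ i : Fin 2, ∑ j : Fin 2, (pd (fun y => v y i) j x) ^ 2 :=
    fun x => Real.sq_sqrt (by positivity)
  have i3 : Integrable (fun x => Real.sqrt ((u x 0 ^ 2 + u x 1 ^ 2) * (w x 0 ^ 2 + w x 1 ^ 2)) *
      Real.sqrt (∑ i : Fin 2, ∑ j : Fin 2, (pd (fun y => v y i) j x) ^ 2)) :=
    aux_integrable u husupp _ (Continuous.mul (by fun_prop) kD.sqrt) (fun x hx => by simp [hx])
  have cs2 := aux_cs volume
    (fun x => Real.sqrt ((u x 0 ^ 2 + u x 1 ^ 2) * (w x 0 ^ 2 + w x 1 ^ 2)))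
    (fun x => Real.sqrt (∑ i : Fin 2, ∑ j : Fin 2, (pd (fun y => v y i) j x) ^ 2))
    (by simpa only [sq1] using iuw) (by simpa only [sq2] using iDv) i3
  simp only [sq1, sq2] at cs2
  have hT : |triFormA u v w| ≤
      ∫ x, Real.sqrt ((u x 0 ^ 2 + u x 1 ^ 2) * (w x 0 ^ 2 + w x 1 ^ 2)) *
      Real.sqrt (∑ i : Fin 2, ∑ j : Fin 2, (pd (fun y => v y i) j x) ^ 2) := by
    unfold triFormA
    rw [← Real.norm_eq_abs]
    refine norm_integral_le_of_norm_le i3 (Filter.Eventually.of_forall fun x => ?_)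
    rw [Real.norm_eq_abs]
    refine abs_le_of_sq_le_sq ?_ (by positivity)
    rw [mul_pow, sq1, sq2]
    have := Finset.sum_mul_sq_le_sq_mul_sq (Finset.univ : Finset (Fin 2 × Fin 2))
      (fun k => u x k.2 * w x k.1) (fun k => pd (fun y => v y k.1) k.2 x)
    simp only [Fintype.sum_prod_type, Fin.sum_univ_two] at this ⊢
    calc _ = _ := ?_
      _ ≤ _ := this
      _ = _ := ?_
    · ring
    · ring
  unfold dirichletNorm
  have nDu : 0 ≤ ∫ x, ∑ i : Fin 2, ∑ j : Fin 2, (pd (fun y => u y i) j x) ^ 2 :=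
    integral_nonneg fun x => by positivity
  have nDv : 0 ≤ ∫ x, ∑ i : Fin 2, ∑ j : Fin 2, (pd (fun y => v y i) j x) ^ 2 :=
    integral_nonneg fun x => by positivity
  have nDw : 0 ≤ ∫ x, ∑ i : Fin 2, ∑ j : Fin 2, (pd (fun y => w y i) j x) ^ 2 :=
    integral_nonneg fun x => by positivity
  have nXw : 0 ≤ ∫ x, (w x 0 ^ 2 + w x 1 ^ 2) ^ 2 := integral_nonneg fun x => by positivity
  have nV : 0 ≤ (volume G).toReal := ENNReal.toReal_nonneg
  generalize (∫ x, ∑ i : Fin 2, ∑ j : Fin 2, (pd (fun y => u y i) j x) ^ 2) = Du at *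
  generalize (∫ x, ∑ i : Fin 2, ∑ j : Fin 2, (pd (fun y => v y i) j x) ^ 2) = Dv at *
  generalize (∫ x, ∑ i : Fin 2, ∑ j : Fin 2, (pd (fun y => w y i) j x) ^ 2) = Dw at *
  generalize (∫ x, (u x 0 ^ 2 + u x 1 ^ 2) ^ 2) = Xu at *
  generalize (∫ x, (w x 0 ^ 2 + w x 1 ^ 2) ^ 2) = Xw at *
  generalize (∫ x, (u x 0 ^ 2 + u x 1 ^ 2) * (w x 0 ^ 2 + w x 1 ^ 2)) = Y at *
  generalize (volume G).toReal = V at *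
  have hY : Y ≤ V / 4 * (Du * Dw) := by
    refine le_of_abs_le (abs_le_of_sq_le_sq ?_ (by positivity))
    refine cs1.trans ((mul_le_mul hXu hXw nXw (by positivity)).trans_eq ?_)
    ring
  refine hT.trans (le_of_abs_le (abs_le_of_sq_le_sq ?_ (by positivity)))
  refine cs2.trans ((mul_le_mul_of_nonneg_right hY nDv).trans_eq ?_)
  simp only [mul_pow, div_pow, Real.sq_sqrt nV, Real.sq_sqrt nDu, Real.sq_sqrt nDv,
    Real.sq_sqrt nDw]
  ring
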